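/- In every non-idempotent Kleene algebra, the star-rewrite rule holds: for all elements p, q, r, if p·q = r·p then p·q* = r*·p. -/

import Mathlib

/-- A non-idempotent Kleene algebra (NKA): a (not necessarily additively
idempotent) semiring equipped with a partial order preserved by `+` and `*`,
and a star operation satisfying `1 + p * p⋆ ≤ p⋆` and the two induction laws. -/
class NKA (K : Type*) extends Semiring K, PartialOrder K where
  star : K → K
  add_le_add' : ∀ {p q r s : K}, p ≤ q → r ≤ s → p + r ≤ q + s
  mul_le_mul' : ∀ {p q r s : K}, p ≤ q → r ≤ s → p * r ≤ q * s
  one_add_mul_star_le : ∀ p : K, 1 + p * star p ≤ star p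
  star_ind_left : ∀ {p q r : K}, q + p * r ≤ r → star p * q ≤ r
  star_ind_right : ∀ {p q r : K}, q + r * p ≤ r → q * star p ≤ r

postfix:max "⋆" => NKA.star

/-- `r⋆` is also a prefixed point for right multiplication by `r`. Left induction, applied to
`r + r * (r * r⋆) ≤ r * r⋆`, gives `r⋆ * r ≤ r * r⋆`, which reduces the claim to the unfolding
axiom. -/
theorem one_add_star_mul_le {K : Type*} [NKA K] (r : K) : 1 + r⋆ * r ≤ r⋆ := by
  have hcomm : r⋆ * r ≤ r * r⋆ := by
    apply NKA.star_ind_left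
    calc r + r * (r * r⋆) = r * (1 + r * r⋆) := by rw [mul_add, mul_one]
      _ ≤ r * r⋆ := NKA.mul_le_mul' le_rfl (NKA.one_add_mul_star_le r)
  exact (NKA.add_le_add' le_rfl hcomm).trans (NKA.one_add_mul_star_le r)

/-- Star-rewrite rule in any non-idempotent Kleene algebra. -/
theorem nka_star_rewrite {K : Type*} [NKA K] (p q r : K) (h : p * q = r * p) :
    p * q⋆ = r⋆ * p := by
  apply le_antisymm
  · apply NKA.star_ind_right
    calc p + r⋆ * p * q = (1 + r⋆ * r) * p := by
          rw [mul_assoc, h, add_mul, one_mul, mul_assoc]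
      _ ≤ r⋆ * p := NKA.mul_le_mul' (one_add_star_mul_le r) le_rfl
  · apply NKA.star_ind_left
    calc p + r * (p * q⋆) = p * (1 + q * q⋆) := by
          rw [← mul_assoc, ← h, mul_add, mul_one, mul_assoc]
      _ ≤ p * q⋆ := NKA.mul_le_mul' le_rfl (NKA.one_add_mul_star_le q)
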